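/- Let R be a U-WLL DCTRS over a signature F, t a reachable term in T(F̄,V), and σ a substitution over F̄ whose range consists of reachable terms. If Φ(σ restricted to Var(t)) = {σ'} for some substitution σ' (i.e., |Φ(σ|_{Var(t)})| = 1), then Φ( (t̂)‾ σ ) = { t̂ σ' }, where (t̂)‾ denotes the term t̂ re-embedded into T(F̄,V) via the bar mapping. -/

import Mathlib

set_option autoImplicit false

/-- First-order terms over a signature `F` and variables `V`. -/
inductive Term (F : Type) (V : Type) : Type where
  | var : V → Term F V
  | app : F → List (Term F V) → Term F V

namespace Term

variable {F V G W : Type}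

/-- Application of a substitution. -/
def subst (σ : V → Term F W) : Term F V → Term F W
  | .var x => σ x
  | .app f ts => .app f (ts.attach.map (fun ⟨t, _⟩ => subst σ t))

/-- Renaming of variables. -/
def rename (g : V → W) (t : Term F V) : Term F W := t.subst (fun x => .var (g x))

/-- Mapping of function symbols. -/
def mapF (g : F → G) : Term F V → Term G V
  | .var x => .var x
  | .app f ts => .app (g f) (ts.attach.map (fun ⟨t, _⟩ => mapF g t))

/-- Number of occurrences of the variable `x` in a term. -/
def count [DecidableEq V] (x : V) : Term F V → ℕ
  | .var y => if y = x then 1 else 0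
  | .app _ ts => (ts.attach.map (fun ⟨t, _⟩ => count x t)).sum

/-- The list of variables occurring in a term (with repetitions). -/
def varList : Term F V → List V
  | .var x => [x]
  | .app _ ts => ts.attach.flatMap (fun ⟨t, _⟩ => varList t)

/-- A term is linear if every variable occurs at most once in it. -/
def Linear [DecidableEq V] (t : Term F V) : Prop := ∀ x : V, t.count x ≤ 1

/-- Well-formedness of a term with respect to an arity assignment. -/
inductive WF (ar : F → ℕ) : Term F V → Prop where
  | var (x : V) : WF ar (.var x)
  | app (f : F) (ts : List (Term F V)) :
      ts.length = ar f → (∀ t ∈ ts, WF ar t) → WF ar (.app f ts)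

end Term

/-- Number of occurrences of `x` in a sequence of terms. -/
def seqCount {F V : Type} [DecidableEq V] (x : V) (ts : List (Term F V)) : ℕ :=
  (ts.map (Term.count x)).sum

/-- An oriented conditional rewrite rule `l → r ⇐ s1 ≈ t1, …, sk ≈ tk`. -/
structure CRule (F V : Type) : Type where
  lhs : Term F V
  rhs : Term F V
  conds : List (Term F V × Term F V)

/-- A conditional term rewriting system: a set of conditional rules. -/
abbrev CTRS (F V : Type) := Set (CRule F V)

namespace CRule

variable {F V W : Type}

/-- The sequence `l, t1, …, tk` of "pattern" terms of a rule. -/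
def pats (ρ : CRule F V) : List (Term F V) := ρ.lhs :: ρ.conds.map Prod.snd

/-- The sequence `r, s1, …, sk` of "source" terms of a rule. -/
def srcs (ρ : CRule F V) : List (Term F V) := ρ.rhs :: ρ.conds.map Prod.fst

/-- Weak left-linearity: `|l,t1,…,tk|_x = 1` for every `x ∈ Var(r,s1,…,sk)`. -/
def WLL [DecidableEq V] (ρ : CRule F V) : Prop :=
  ∀ x : V, 0 < seqCount x ρ.srcs → seqCount x ρ.pats = 1

/-- Determinism: `Var(si) ⊆ Var(l, t1, …, t_{i−1})`. -/
def Det [DecidableEq V] (ρ : CRule F V) : Prop :=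
  ∀ i : ℕ, ∀ h : i < ρ.conds.length, ∀ x : V,
    0 < Term.count x (ρ.conds.get ⟨i, h⟩).1 →
    0 < seqCount x (ρ.lhs :: (ρ.conds.take i).map Prod.snd)

/-- Type 3: `Var(r) ⊆ Var(l, s1, t1, …, sk, tk)`. -/
def Type3 [DecidableEq V] (ρ : CRule F V) : Prop :=
  ∀ x : V, 0 < Term.count x ρ.rhs →
    0 < seqCount x (ρ.lhs :: ρ.conds.flatMap (fun c => [c.1, c.2]))

/-- The left-hand side is a non-variable term. -/
def LhsNonVar (ρ : CRule F V) : Prop := ∀ x : V, ρ.lhs ≠ .var x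

/-- Renaming the variables of a rule. -/
def mapV (g : V → W) (ρ : CRule F V) : CRule F W :=
  ⟨ρ.lhs.rename g, ρ.rhs.rename g, ρ.conds.map (fun c => (c.1.rename g, c.2.rename g))⟩

end CRule

/-- `R` is a deterministic CTRS (of Type 3, left-hand sides non-variable). -/
def IsDCTRS {F V : Type} [DecidableEq V] (R : CTRS F V) : Prop :=
  ∀ ρ ∈ R, ρ.Det ∧ ρ.Type3 ∧ ρ.LhsNonVar

/-- All rules of `R` are weakly left-linear. -/
def IsWLL {F V : Type} [DecidableEq V] (R : CTRS F V) : Prop := ∀ ρ ∈ R, ρ.WLL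

/-- Closure of a relation under contexts (rewriting below the root). -/
inductive CtxStep {F V : Type} (root : Term F V → Term F V → Prop) :
    Term F V → Term F V → Prop where
  | root {s t : Term F V} : root s t → CtxStep root s t
  | congr {f : F} {pre post : List (Term F V)} {s t : Term F V} :
      CtxStep root s t →
      CtxStep root (.app f (pre ++ s :: post)) (.app f (pre ++ t :: post))

/-- A root rewrite step using a rule of `R`, conditions evaluated with `prev`. -/
def RootStep {F V : Type} (R : CTRS F V) (prev : Term F V → Term F V → Prop)
    (s t : Term F V) : Prop :=
  ∃ ρ ∈ R, ∃ σ : V → Term F V,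
    s = ρ.lhs.subst σ ∧ t = ρ.rhs.subst σ ∧
    ∀ c ∈ ρ.conds, Relation.ReflTransGen prev (c.1.subst σ) (c.2.subst σ)

/-- The level-stratified reduction relation `→_{(n),R}`. -/
def LevelStep {F V : Type} (R : CTRS F V) : ℕ → Term F V → Term F V → Prop
  | 0 => fun _ _ => False
  | n + 1 => CtxStep (RootStep R (LevelStep R n))

/-- The reduction relation `→_R = ⋃_{n} →_{(n),R}`. -/
def Red {F V : Type} (R : CTRS F V) (s t : Term F V) : Prop :=
  ∃ n : ℕ, LevelStep R n s t

/-- Many-step reduction `→*_R`. -/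
def RedStar {F V : Type} (R : CTRS F V) : Term F V → Term F V → Prop :=
  Relation.ReflTransGen (Red R)

/-- `n`-fold composition of a relation. -/
def NFold {α : Type} (r : α → α → Prop) : ℕ → α → α → Prop
  | 0 => fun a b => a = b
  | n + 1 => fun a c => ∃ b, r a b ∧ NFold r n b c

/-- One-hole contexts. -/
inductive Ctx (F V : Type) : Type where
  | hole : Ctx F V
  | app : F → List (Term F V) → Ctx F V → List (Term F V) → Ctx F V

/-- Filling the hole of a context with a term. -/
def Ctx.fill {F V : Type} : Ctx F V → Term F V → Term F V
  | .hole, t => t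
  | .app f pre C post, t => .app f (pre ++ C.fill t :: post)
/-- Signature extended with the fresh symbols `U^ρ_i`. -/
abbrev UF (F V : Type) := F ⊕ (CRule F V × ℕ)

/-- Embedding of terms over `F` into terms over the extended signature `U_R(F)`. -/
def liftF {F V : Type} (t : Term F V) : Term (UF F V) V := t.mapF Sum.inl

/-- The list `X⃗_i` enumerating `Var(l, t1, …, t_{i−1})` in a fixed order. -/
def Xlist {F V : Type} [DecidableEq V] (ρ : CRule F V) (i : ℕ) : List V :=
  (ρ.lhs.varList ++ ((ρ.conds.take (i - 1)).map Prod.snd).flatMap Term.varList).dedup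

/-- A dummy condition (used as a default, never relevant). -/
def dummyCond {F V : Type} (ρ : CRule F V) : Term F V × Term F V := (ρ.lhs, ρ.lhs)

/-- The term `U^ρ_i(t, X⃗_i)`. -/
def uterm {F V : Type} [DecidableEq V] (ρ : CRule F V) (i : ℕ) (t : Term F V) :
    Term (UF F V) V :=
  .app (Sum.inr (ρ, i)) (liftF t :: (Xlist ρ i).map Term.var)

/-- Left-hand side of the `j`-th unraveled rule of `ρ` (j = 0, …, k). -/
def ulhs {F V : Type} [DecidableEq V] (ρ : CRule F V) (j : ℕ) : Term (UF F V) V :=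
  if j = 0 then liftF ρ.lhs
  else uterm ρ j (ρ.conds.getD (j - 1) (dummyCond ρ)).2

/-- Right-hand side of the `j`-th unraveled rule of `ρ` (j = 0, …, k). -/
def urhs {F V : Type} [DecidableEq V] (ρ : CRule F V) (j : ℕ) : Term (UF F V) V :=
  if j = ρ.conds.length then liftF ρ.rhs
  else uterm ρ (j + 1) (ρ.conds.getD j (dummyCond ρ)).1

/-- The unconditional rules `U(ρ)` obtained by unraveling the rule `ρ`. -/
def URules {F V : Type} [DecidableEq V] (ρ : CRule F V) : Set (CRule (UF F V) V) :=
  { r | ∃ j ≤ ρ.conds.length, r = ⟨ulhs ρ j, urhs ρ j, []⟩ }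

/-- The simultaneous unraveling `U(R)` of a DCTRS `R`. -/
def USys {F V : Type} [DecidableEq V] (R : CTRS F V) : CTRS (UF F V) V :=
  ⋃ ρ ∈ R, URules ρ

/-- `R` is ultra-WLL (`U`-WLL): every rule of `U(R)` is WLL. -/
def IsUWLL {F V : Type} [DecidableEq V] (R : CTRS F V) : Prop :=
  ∀ r ∈ USys R, r.WLL
/-- Variables used for terms over the extended signature `F̄`: original
variables plus a countable supply of fresh variables. -/
abbrev WVar (V : Type) := V ⊕ ℕ

/-- The extended signature `F̄` of the SR transformation: the original symbols
(`c̄` for constructors, `f̄` for defined symbols, with extra arguments appended),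
the fresh constant `⊥`, the fresh unary symbol `⟨·⟩`, and the fresh tuple
symbols `[ ]^ρ_j`. -/
inductive SSym (F V : Type) : Type where
  | orig : F → SSym F V
  | bot : SSym F V
  | guard : SSym F V
  | tup : CRule F V → ℕ → SSym F V

/-- Terms over the extended signature `F̄`. -/
abbrev STerm (F V : Type) := Term (SSym F V) (WVar V)

/-- The fresh constant `⊥`. -/
def botT {F V : Type} : STerm F V := .app .bot []

/-- The fresh unary symbol `⟨·⟩`. -/
def guardT {F V : Type} (t : STerm F V) : STerm F V := .app .guard [t]

/-- `t̄`: the embedding of `t ∈ T(F,V)` into `T(F̄,V)` in which all the extra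
arguments of defined symbols are filled with `⊥`.  Here `mOf f` is the number
of conditional `f`-rules (0 for constructors). -/
def barT {F V : Type} (mOf : F → ℕ) : Term F V → STerm F V
  | .var x => .var (Sum.inl x)
  | .app f ts =>
      .app (.orig f)
        ((ts.attach.map (fun ⟨t, _⟩ => barT mOf t)) ++ List.replicate (mOf f) botT)

mutual
/-- `ext(t)`: the embedding of `t ∈ T(F,V)` into `T(F̄,V)` in which the extra
arguments of defined symbols are filled with distinct fresh variables; a
counter is threaded through to keep the fresh variables distinct. -/
def extT {F V : Type} (mOf : F → ℕ) : Term F V → ℕ → STerm F V × ℕ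
  | .var x, c => (.var (Sum.inl x), c)
  | .app f ts, c =>
      let p := extTList mOf ts c
      (.app (.orig f)
         (p.1 ++ (List.range (mOf f)).map (fun k => .var (Sum.inr (p.2 + k)))),
       p.2 + mOf f)

/-- `ext` on lists of terms, threading the fresh-variable counter. -/
def extTList {F V : Type} (mOf : F → ℕ) : List (Term F V) → ℕ → List (STerm F V) × ℕ
  | [], c => ([], c)
  | t :: ts, c =>
      let p := extT mOf t c
      let q := extTList mOf ts p.2
      (p.1 :: q.1, q.2)
end

/-- The backtranslation `t̂`: the partial mapping erasing `⟨·⟩` and the extra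
arguments of defined symbols, recovering a term over `F`. -/
def hatT {F V : Type} (ar : F → ℕ) : STerm F V → Option (Term F V)
  | .var (Sum.inl x) => some (.var x)
  | .var (Sum.inr _) => none
  | .app (.orig f) ts =>
      Option.map (Term.app f)
        ((ts.take (ar f)).attach.mapM (fun t => hatT ar t.1))
  | .app .guard [t] => hatT ar t
  | .app _ _ => none
decreasing_by
  · have h1 : t.1 ∈ ts := List.mem_of_mem_take t.2
    have := List.sizeOf_lt_of_mem h1
    simp only [Term.app.sizeOf_spec]
    omega
  · simp
    omega

/-- Embedding of `T(F,V)` into the terms over the unraveling signature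
`U_R(F)` with extended variables. -/
def liftUV {F V : Type} (t : Term F V) : Term (UF F V) (WVar V) :=
  (t.mapF Sum.inl).rename Sum.inl
/-- The list `V⃗_j` enumerating `Var(t1, …, t_{j−1})` in a fixed order. -/
def Vlist {F V : Type} [DecidableEq V] (ρ : CRule F V) (j : ℕ) : List V :=
  (((ρ.conds.take (j - 1)).map Prod.snd).flatMap Term.varList).dedup

/-- The term `[⟨inner⟩, V⃗_j]^ρ_j` (used in the rewrite rules of `SR(R)`). -/
def tupT {F V : Type} [DecidableEq V] (ρ : CRule F V) (j : ℕ) (inner : STerm F V) :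
    STerm F V :=
  .app (.tup ρ j) (guardT inner :: (Vlist ρ j).map (fun v => .var (Sum.inl v)))

/-- The `j`-th unconditional rule (j = 0, …, k) obtained by the SR
transformation from the `i`-th conditional `f`-rule
`ρ : f(w1,…,wn) → r ⇐ s1 ≈ t1, …, sk ≈ tk` (where `i = idx ρ`). -/
def condSRRule {F V : Type} [DecidableEq V] (mOf : F → ℕ) (idx : CRule F V → ℕ)
    (ρ : CRule F V) (j : ℕ) : CRule (SSym F V) (WVar V) :=
  match ρ.lhs with
  | .var _ => ⟨barT mOf ρ.lhs, barT mOf ρ.rhs, []⟩  -- irrelevant (lhs is never a variable)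
  | .app f ws =>
    let i := idx ρ
    let m := mOf f
    let p := extTList mOf ws 0
    let ws' := p.1
    let c0 := p.2
    let slot : STerm F V → List (STerm F V) := fun mid =>
      (List.range m).map (fun q => if q = i - 1 then mid else .var (Sum.inr (c0 + q)))
    let k := ρ.conds.length
    ⟨(if j = 0 then
        Term.app (SSym.orig f) (ws' ++ slot botT)
      else
        Term.app (SSym.orig f)
          (ws' ++ slot (tupT ρ j (extT mOf (ρ.conds.getD (j - 1) (dummyCond ρ)).2 (c0 + m)).1))),
     (if j = k then
        guardT (barT mOf ρ.rhs)
      else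
        Term.app (SSym.orig f)
          (ws' ++ slot (tupT ρ (j + 1) (barT mOf (ρ.conds.getD j (dummyCond ρ)).1)))),
     []⟩

/-- The unconditional rule `ext(l) → ⟨r̄⟩` obtained by the SR transformation
from an unconditional rule `l → r`. -/
def uncondSRRule {F V : Type} (mOf : F → ℕ) (ρ : CRule F V) : CRule (SSym F V) (WVar V) :=
  ⟨(extT mOf ρ.lhs 0).1, guardT (barT mOf ρ.rhs), []⟩

/-- The auxiliary rule `⟨⟨x⟩⟩ → ⟨x⟩`. -/
def auxGuard {F V : Type} : CRule (SSym F V) (WVar V) :=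
  ⟨guardT (guardT (.var (Sum.inr 0))), guardT (.var (Sum.inr 0)), []⟩

/-- The auxiliary rule shifting `⟨·⟩` upward over the `i`-th argument of the
symbol `f` (and resetting the extra arguments of defined symbols):
`f̄(x1,…,⟨xi⟩,…,xn, z1,…,zm) → ⟨f̄(x1,…,xn, ⊥,…,⊥)⟩`. -/
def auxShift {F V : Type} (ar mOf : F → ℕ) (f : F) (i : ℕ) : CRule (SSym F V) (WVar V) :=
  ⟨Term.app (SSym.orig f)
     (((List.range (ar f)).map
         (fun q => if q = i then guardT (.var (Sum.inr q)) else .var (Sum.inr q))) ++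
      (List.range (mOf f)).map (fun q => .var (Sum.inr (ar f + q)))),
   guardT (Term.app (SSym.orig f)
     (((List.range (ar f)).map (fun q => Term.var (Sum.inr q))) ++
      List.replicate (mOf f) botT)),
   []⟩

/-- The SR transformation `SR(R)`: the unconditional TRS over `F̄` consisting of
the transformed rules of `R` together with the auxiliary rules `R_aux`. -/
def SRSys {F V : Type} [DecidableEq V] (R : CTRS F V) (ar mOf : F → ℕ)
    (idx : CRule F V → ℕ) : CTRS (SSym F V) (WVar V) :=
  { r | (∃ ρ ∈ R, ρ.conds = [] ∧ r = uncondSRRule mOf ρ) ∨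
        (∃ ρ ∈ R, ρ.conds ≠ [] ∧ ∃ j ≤ ρ.conds.length, r = condSRRule mOf idx ρ j) ∨
        r = auxGuard ∨
        (∃ (f : F) (i : ℕ), i < ar f ∧ r = auxShift ar mOf f i) }

/-- Well-formedness of the data `(ar, mOf, idx)` describing the signature `F`
(with arities `ar`), the number `mOf f` of conditional `f`-rules of `R`, and
the ranking `idx` of the conditional rules of each defined symbol by some
arbitrary but fixed order. -/
def GoodSetup {F V : Type} [DecidableEq V] (R : CTRS F V) (ar mOf : F → ℕ)
    (idx : CRule F V → ℕ) : Prop :=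
  (∀ ρ ∈ R, ρ.lhs.WF ar ∧ ρ.rhs.WF ar ∧ ∀ c ∈ ρ.conds, c.1.WF ar ∧ c.2.WF ar) ∧
  (∀ ρ ∈ R, ∃ (f : F) (ws : List (Term F V)), ρ.lhs = Term.app f ws) ∧
  (∀ ρ ∈ R, ρ.conds ≠ [] →
     ∀ (f : F) (ws : List (Term F V)), ρ.lhs = Term.app f ws →
       1 ≤ idx ρ ∧ idx ρ ≤ mOf f) ∧
  (∀ ρ₁, ρ₁ ∈ R → ∀ ρ₂, ρ₂ ∈ R → ρ₁.conds ≠ [] → ρ₂.conds ≠ [] →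
     ∀ (f : F) (ws₁ ws₂ : List (Term F V)),
       ρ₁.lhs = Term.app f ws₁ → ρ₂.lhs = Term.app f ws₂ →
       idx ρ₁ = idx ρ₂ → ρ₁ = ρ₂) ∧
  (∀ (f : F) (i : ℕ), 1 ≤ i → i ≤ mOf f →
     ∃ ρ ∈ R, ρ.conds ≠ [] ∧ (∃ ws : List (Term F V), ρ.lhs = Term.app f ws) ∧ idx ρ = i)
/-- The unraveled system `U(R)` with its rules considered over the extended
variable set `WVar V` (so that it rewrites the terms in the image of `Φ`). -/
def USysW {F V : Type} [DecidableEq V] (R : CTRS F V) : CTRS (UF F V) (WVar V) :=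
  { r | ∃ r' ∈ USys R, r = r'.mapV Sum.inl }

/-- Membership in the set `Φ(t)`: `PhiMem R ar mOf idx t u` states that
`u ∈ Φ(t)`, where `Φ` is the mapping (defined mutually with the auxiliary
mapping `Ψ`) from reachable terms of `T(F̄,V)` to sets of terms of
`T(U_R(F),V)`:
* `Φ(x) = {x}` for a variable `x`;
* `Φ(⟨t⟩) = Φ(t)`;
* for an original symbol `f` applied to arguments `ts`, `Φ` contains
  `f(t'1,…,t'n)` for all `t'p ∈ Φ(tp)` of the first `ar f` arguments (this is
  the clause for constructors and the clause `Ψ(f̄(t⃗,⊥,…,⊥))` for defined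
  symbols), and
* for each `i`-th extra argument of a defined symbol `f` that is a tuple
  `[⟨t'⟩, t'1,…,t'_{nj}]^ρ_j` (where `ρ` is the `i`-th conditional `f`-rule),
  `Φ` contains all terms `U^ρ_j(u', u⃗')` with `u' ∈ Φ(t')` and
  `u⃗' ∈ Φ(σ(X⃗j))`, where `σ` is a substitution with `σ(V⃗j) = t'1,…,t'_{nj}`
  and `σ(ext(w1),…,ext(wn))` equal to the main arguments of the node. -/
inductive PhiMem {F V : Type} [DecidableEq V] (R : CTRS F V) (ar mOf : F → ℕ)
    (idx : CRule F V → ℕ) : STerm F V → Term (UF F V) (WVar V) → Prop where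
  | var (x : WVar V) : PhiMem R ar mOf idx (.var x) (.var x)
  | guard {t : STerm F V} {u : Term (UF F V) (WVar V)} :
      PhiMem R ar mOf idx t u → PhiMem R ar mOf idx (guardT t) u
  | orig {f : F} {ts : List (STerm F V)} {us : List (Term (UF F V) (WVar V))} :
      us.length = (ts.take (ar f)).length →
      (∀ p ∈ List.zip (ts.take (ar f)) us, PhiMem R ar mOf idx p.1 p.2) →
      PhiMem R ar mOf idx (.app (.orig f) ts) (.app (Sum.inl f) us)
  | cond {f : F} {ts : List (STerm F V)} {ρ : CRule F V} {ws : List (Term F V)}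
      {j : ℕ} {tin : STerm F V} {vargs : List (STerm F V)}
      {σ : WVar V → STerm F V} {u : Term (UF F V) (WVar V)}
      {us : List (Term (UF F V) (WVar V))} :
      ρ ∈ R → ρ.conds ≠ [] → ρ.lhs = .app f ws →
      1 ≤ j → j ≤ ρ.conds.length →
      (ts.drop (ar f))[idx ρ - 1]? = some (.app (.tup ρ j) (guardT tin :: vargs)) →
      (Vlist ρ j).map (fun v => σ (Sum.inl v)) = vargs →
      (extTList mOf ws 0).1.map (Term.subst σ) = ts.take (ar f) →
      PhiMem R ar mOf idx tin u →
      us.length = (Xlist ρ j).length →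
      (∀ p ∈ List.zip (Xlist ρ j) us, PhiMem R ar mOf idx (σ (Sum.inl p.1)) p.2) →
      PhiMem R ar mOf idx (.app (.orig f) ts) (.app (Sum.inr (ρ, j)) (u :: us))

/-- The set `Φ(t)`. -/
def Phi {F V : Type} [DecidableEq V] (R : CTRS F V) (ar mOf : F → ℕ)
    (idx : CRule F V → ℕ) (t : STerm F V) : Set (Term (UF F V) (WVar V)) :=
  { u | PhiMem R ar mOf idx t u }

/-- `σ' ∈ Φ(σ)`, the extension of `Φ` to substitutions:
`Dom(σ') ⊆ Dom(σ)` and `xσ' ∈ Φ(xσ)` for every `x ∈ Dom(σ)`. -/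
def PhiSub {F V : Type} [DecidableEq V] (R : CTRS F V) (ar mOf : F → ℕ)
    (idx : CRule F V → ℕ) (σ : WVar V → STerm F V)
    (σ' : WVar V → Term (UF F V) (WVar V)) : Prop :=
  ∀ x : WVar V, PhiMem R ar mOf idx (σ x) (σ' x)

/-- The relation `s ⇝ t`: for each `t' ∈ Φ(t)` there exists `s' ∈ Φ(s)` with
`s' →*_{U(R)} t'`. -/
def Leadsto {F V : Type} [DecidableEq V] (R : CTRS F V) (ar mOf : F → ℕ)
    (idx : CRule F V → ℕ) (s t : STerm F V) : Prop :=
  ∀ u, PhiMem R ar mOf idx t u →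
    ∃ u', PhiMem R ar mOf idx s u' ∧ RedStar (USysW R) u' u

/-- A term of `T(F̄,V)` is reachable if it is a subterm of some term reachable
by `SR(R)` from `⟨s̄⟩` for some `s ∈ T(F,V)`. -/
def SRReachable {F V : Type} [DecidableEq V] (R : CTRS F V) (ar mOf : F → ℕ)
    (idx : CRule F V → ℕ) (t : STerm F V) : Prop :=
  ∃ (s : Term F V) (C : Ctx (SSym F V) (WVar V)),
    s.WF ar ∧ RedStar (SRSys R ar mOf idx) (guardT (barT mOf s)) (C.fill t)

/-- The restriction `σ|_X` of a substitution to the variables of a term `t`. -/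
def restrictTo {F V : Type} [DecidableEq V] (σ : WVar V → STerm F V) (t : STerm F V) :
    WVar V → STerm F V :=
  fun x => if 0 < t.count x then σ x else .var x

theorem Term.ind' {F V : Type} {P : Term F V → Prop} (hv : ∀ x, P (.var x))
    (ha : ∀ f ts, (∀ t ∈ ts, P t) → P (.app f ts)) : ∀ t, P t
  | .var x => hv x
  | .app f ts => ha f ts (fun t _ => Term.ind' hv ha t)

theorem subst_app' {F V W : Type} (σ : V → Term F W) (f : F) (ts : List (Term F V)) :
    (Term.app f ts).subst σ = .app f (ts.map (Term.subst σ)) := by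
  simp [Term.subst]

theorem subst_var' {F V W : Type} (σ : V → Term F W) (x : V) :
    (Term.var x : Term F V).subst σ = σ x := by
  simp [Term.subst]

theorem mapF_app' {F G V : Type} (g : F → G) (f : F) (ts : List (Term F V)) :
    (Term.app f ts).mapF g = .app (g f) (ts.map (Term.mapF g)) := by
  simp [Term.mapF]

theorem mem_varList_app {F V : Type} (x : V) (f : F) (ts : List (Term F V)) :
    x ∈ (Term.app f ts).varList ↔ ∃ t ∈ ts, x ∈ t.varList := by
  simp [Term.varList]

theorem mem_varList_var {F V : Type} (x y : V) :
    x ∈ (Term.var y : Term F V).varList ↔ x = y := by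
  simp [Term.varList]

theorem barT_app' {F V : Type} (mOf : F → ℕ) (f : F) (ts : List (Term F V)) :
    barT mOf (.app f ts) = .app (.orig f) (ts.map (barT mOf) ++ List.replicate (mOf f) botT) := by
  simp [barT]

theorem count_pos' {F V : Type} [DecidableEq V] (x : V) (t : Term F V) :
    0 < t.count x ↔ x ∈ t.varList := by
  induction t using Term.ind' with
  | hv y => simp [Term.count, Term.varList]; grind
  | ha f ts ih =>
    rw [mem_varList_app]
    simp only [Term.count]
    rw [List.sum_pos_iff_exists_pos_nat]
    simp only [List.mem_map, List.mem_attach, true_and, Subtype.exists]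
    constructor
    · rintro ⟨n, ⟨t, ht, rfl⟩, hn⟩
      exact ⟨t, ht, (ih t ht).1 hn⟩
    · rintro ⟨t, ht, hx⟩
      exact ⟨_, ⟨t, ht, rfl⟩, (ih t ht).2 hx⟩

theorem seqCount_pos' {F V : Type} [DecidableEq V] (x : V) (ts : List (Term F V)) :
    0 < seqCount x ts ↔ ∃ t ∈ ts, x ∈ t.varList := by
  unfold seqCount
  rw [List.sum_pos_iff_exists_pos_nat]
  simp [count_pos']

theorem wf_app_iff {F V : Type} (ar : F → ℕ) (f : F) (ts : List (Term F V)) :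
    Term.WF ar (.app f ts) ↔ ts.length = ar f ∧ ∀ t ∈ ts, Term.WF ar t := by
  constructor
  · intro h; cases h; constructor <;> assumption
  · rintro ⟨a, b⟩; exact .app f ts a b

theorem wf_subst {F V W : Type} (ar : F → ℕ) (σ : V → Term F W) (t : Term F V)
    (ht : t.WF ar) (h : ∀ x ∈ t.varList, (σ x).WF ar) : (t.subst σ).WF ar := by
  induction t using Term.ind' with
  | hv y => rw [subst_var']; exact h y (by simp [Term.varList])
  | ha f ts ih =>
    rw [subst_app', wf_app_iff]
    rw [wf_app_iff] at ht
    refine ⟨by simpa using ht.1, ?_⟩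
    intro s hs
    obtain ⟨t, ht', rfl⟩ := List.mem_map.1 hs
    exact ih t ht' (ht.2 t ht') (fun x hx => h x ((mem_varList_app _ _ _).2 ⟨t, ht', hx⟩))

theorem wf_of_subst {F V W : Type} (ar : F → ℕ) (σ : V → Term F W) (t : Term F V)
    (ht : (t.subst σ).WF ar) : ∀ x ∈ t.varList, (σ x).WF ar := by
  induction t using Term.ind' with
  | hv y =>
    intro x hx
    rw [mem_varList_var] at hx
    subst hx
    rwa [subst_var'] at ht
  | ha f ts ih =>
    rw [subst_app', wf_app_iff] at ht
    intro x hx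
    obtain ⟨t, ht', hx⟩ := (mem_varList_app _ _ _).1 hx
    exact ih t ht' (ht.2 _ (List.mem_map_of_mem ht')) x hx

/-- Arities of the extended signature. -/
def sar {F V : Type} [DecidableEq V] (ar mOf : F → ℕ) : SSym F V → ℕ
  | .orig f => ar f + mOf f
  | .bot => 0
  | .guard => 1
  | .tup ρ j => 1 + (Vlist ρ j).length

section
variable {F V : Type} [DecidableEq V] (ar mOf : F → ℕ)

theorem wf_bot : (botT : STerm F V).WF (sar ar mOf) := by
  simp [botT, wf_app_iff, sar]

theorem wf_guard (t : STerm F V) : (guardT t).WF (sar ar mOf) ↔ t.WF (sar ar mOf) := by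
  simp [guardT, wf_app_iff, sar]

theorem wf_bar (t : Term F V) (h : t.WF ar) : (barT mOf t).WF (sar ar mOf) := by
  induction t using Term.ind' with
  | hv y => simp only [barT]; exact .var _
  | ha f ts ih =>
    rw [barT_app', wf_app_iff]
    rw [wf_app_iff] at h
    refine ⟨by simp [sar, h.1], ?_⟩
    intro s hs
    rcases List.mem_append.1 hs with hs | hs
    · obtain ⟨t, ht', rfl⟩ := List.mem_map.1 hs
      exact ih t ht' (h.2 t ht')
    · rw [List.eq_of_mem_replicate hs]; exact wf_bot ar mOf

theorem varList_bar {F V : Type} (mOf : F → ℕ) (t : Term F V) (x : WVar V)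
    (h : x ∈ (barT mOf t).varList) : ∃ y ∈ t.varList, x = Sum.inl y := by
  induction t using Term.ind' with
  | hv y =>
    simp only [barT, mem_varList_var] at h
    exact ⟨y, by simp [Term.varList], h⟩
  | ha f ts ih =>
    rw [barT_app', mem_varList_app] at h
    obtain ⟨s, hs, hx⟩ := h
    rcases List.mem_append.1 hs with hs | hs
    · obtain ⟨t, ht', rfl⟩ := List.mem_map.1 hs
      obtain ⟨y, hy, e⟩ := ih t ht' hx
      exact ⟨y, (mem_varList_app _ _ _).2 ⟨t, ht', hy⟩, e⟩
    · rw [List.eq_of_mem_replicate hs] at hx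
      simp [botT, mem_varList_app] at hx

theorem ext_list_wf (ts : List (Term F V))
    (h : ∀ t ∈ ts, ∀ c, (extT mOf t c).1.WF (sar ar mOf)) : ∀ c,
    (extTList mOf ts c).1.length = ts.length ∧
    ∀ s ∈ (extTList mOf ts c).1, s.WF (sar ar mOf) := by
  induction ts with
  | nil => intro c; simp [extTList]
  | cons t ts ih =>
    intro c
    simp only [extTList, List.length_cons, List.mem_cons]
    have := ih (fun t ht => h t (List.mem_cons_of_mem _ ht)) (extT mOf t c).2
    refine ⟨by rw [this.1], ?_⟩
    rintro s (rfl | hs)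
    · exact h t List.mem_cons_self c
    · exact this.2 s hs

theorem wf_ext (t : Term F V) (h : t.WF ar) : ∀ c, (extT mOf t c).1.WF (sar ar mOf) := by
  induction t using Term.ind' with
  | hv y => intro c; simp only [extT]; exact .var _
  | ha f ts ih =>
    intro c
    rw [wf_app_iff] at h
    have := ext_list_wf ar mOf ts (fun t ht => ih t ht (h.2 t ht)) c
    simp only [extT]
    rw [wf_app_iff]
    refine ⟨by simp [sar, this.1, h.1], ?_⟩
    intro s hs
    rcases List.mem_append.1 hs with hs | hs
    · exact this.2 s hs
    · obtain ⟨k, _, rfl⟩ := List.mem_map.1 hs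
      exact .var _

theorem ext_list_var (ts : List (Term F V)) (x : V)
    (h : ∀ t ∈ ts, x ∈ t.varList → ∀ c, Sum.inl x ∈ (extT mOf t c).1.varList) :
    (∃ t ∈ ts, x ∈ t.varList) → ∀ c, ∃ s ∈ (extTList mOf ts c).1, Sum.inl x ∈ s.varList := by
  induction ts with
  | nil => simp
  | cons t ts ih =>
    rintro ⟨t', ht', hx⟩ c
    simp only [extTList, List.mem_cons]
    rcases List.mem_cons.1 ht' with rfl | ht''
    · exact ⟨_, Or.inl rfl, h _ List.mem_cons_self hx c⟩
    · obtain ⟨s, hs, hx⟩ := ih (fun t ht => h t (List.mem_cons_of_mem _ ht)) ⟨t', ht'', hx⟩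
        (extT mOf t c).2
      exact ⟨s, Or.inr hs, hx⟩

theorem ext_var (t : Term F V) (x : V) (h : x ∈ t.varList) :
    ∀ c, Sum.inl x ∈ (extT mOf t c).1.varList := by
  induction t using Term.ind' with
  | hv y =>
    intro c
    rw [mem_varList_var] at h
    simp [extT, Term.varList, h]
  | ha f ts ih =>
    intro c
    rw [mem_varList_app] at h
    obtain ⟨s, hs, hx⟩ := ext_list_var mOf ts x ih h c
    simp only [extT]
    rw [mem_varList_app]
    exact ⟨s, List.mem_append_left _ hs, hx⟩

/-- The property of rules that makes rewriting preserve well-formedness. -/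
def GoodRule (r : CRule (SSym F V) (WVar V)) : Prop :=
  r.rhs.WF (sar ar mOf) ∧ ∀ x ∈ r.rhs.varList, x ∈ r.lhs.varList

theorem good_step (S : CTRS (SSym F V) (WVar V)) (hS : ∀ r ∈ S, GoodRule ar mOf r)
    (s t : STerm F V) (h : Red S s t) (hs : s.WF (sar ar mOf)) : t.WF (sar ar mOf) := by
  obtain ⟨n, h⟩ := h
  cases n with
  | zero => exact h.elim
  | succ n =>
    simp only [LevelStep] at h
    induction h with
    | root h =>
      obtain ⟨r, hr, τ, rfl, rfl, _⟩ := h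
      exact wf_subst _ _ _ (hS r hr).1
        (fun x hx => wf_of_subst _ _ _ hs x ((hS r hr).2 x hx))
    | congr _ ih =>
      rw [wf_app_iff] at hs ⊢
      refine ⟨by simpa using hs.1, ?_⟩
      intro a ha
      rcases List.mem_append.1 ha with ha | ha
      · exact hs.2 a (by simp [ha])
      · rcases List.mem_cons.1 ha with rfl | ha
        · exact ih (hs.2 _ (by simp))
        · exact hs.2 a (by simp [ha])

theorem wf_fill (C : Ctx (SSym F V) (WVar V)) (t : STerm F V)
    (h : (C.fill t).WF (sar ar mOf)) : t.WF (sar ar mOf) := by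
  induction C with
  | hole => exact h
  | app f pre C post ih =>
    simp only [Ctx.fill, wf_app_iff] at h
    exact ih (h.2 _ (by simp))

theorem good_uncond (R : CTRS F V) (idx : CRule F V → ℕ) (hS : GoodSetup R ar mOf idx)
    (hD : IsDCTRS R) (ρ : CRule F V) (hρ : ρ ∈ R) (hc : ρ.conds = []) :
    GoodRule ar mOf (uncondSRRule mOf ρ) := by
  refine ⟨(wf_guard ..).2 (wf_bar _ _ _ (hS.1 ρ hρ).2.1), ?_⟩
  intro x hx
  simp only [uncondSRRule, guardT, mem_varList_app, List.mem_singleton, exists_eq_left] at hx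
  obtain ⟨y, hy, rfl⟩ := varList_bar _ _ _ hx
  apply ext_var
  have := (hD ρ hρ).2.1 y ((count_pos' _ _).2 hy)
  simpa [hc, seqCount_pos'] using this

theorem good_auxShift (f : F) (i : ℕ) : GoodRule (V := V) ar mOf (auxShift ar mOf f i) := by
  constructor
  · simp only [auxShift, wf_guard, wf_app_iff]
    refine ⟨by simp [sar], ?_⟩
    intro s hs
    rcases List.mem_append.1 hs with hs | hs
    · obtain ⟨t, ht', rfl⟩ := List.mem_map.1 hs
      exact .var _
    · rw [List.eq_of_mem_replicate hs]; exact wf_bot ar mOf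
  · intro x hx
    simp only [auxShift, guardT, mem_varList_app, List.mem_singleton, exists_eq_left] at hx ⊢
    obtain ⟨s, hs, hx⟩ := hx
    rcases List.mem_append.1 hs with hs | hs
    · obtain ⟨q, hq, rfl⟩ := List.mem_map.1 hs
      refine ⟨_, List.mem_append_left _ (List.mem_map.2 ⟨q, hq, rfl⟩), ?_⟩
      split
      · simpa [mem_varList_app] using hx
      · exact hx
    · rw [List.eq_of_mem_replicate hs] at hx
      simp [botT, mem_varList_app] at hx

theorem mem_Vlist (ρ : CRule F V) (j : ℕ) (x : V) :
    x ∈ Vlist ρ j ↔ ∃ c ∈ ρ.conds.take (j - 1), x ∈ c.2.varList := by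
  simp only [Vlist, List.mem_dedup, List.mem_flatMap, List.mem_map, exists_exists_and_eq_and]

theorem take_succ_mem {α : Type} (l : List α) (j : ℕ) (d c : α) (h : c ∈ l.take (j + 1)) :
    c ∈ l.take j ∨ (j < l.length ∧ c = l.getD j d) := by
  by_cases hj : j < l.length
  · rw [List.take_succ_eq_append_getElem hj] at h
    rcases List.mem_append.1 h with h | h
    · exact Or.inl h
    · right
      refine ⟨hj, ?_⟩
      simpa [List.getD_eq_getElem?_getD, hj] using h
  · left
    rw [List.take_of_length_le (by omega)] at h
    rwa [List.take_of_length_le (by omega)]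

theorem good_cond (R : CTRS F V) (idx : CRule F V → ℕ) (hS : GoodSetup R ar mOf idx)
    (hD : IsDCTRS R) (ρ : CRule F V) (hρ : ρ ∈ R) (hc : ρ.conds ≠ []) (j : ℕ)
    (hj : j ≤ ρ.conds.length) :
    GoodRule ar mOf (condSRRule mOf idx ρ j) := by
  obtain ⟨hwl, hwr, hwc⟩ := hS.1 ρ hρ
  obtain ⟨f, ws, hl⟩ := hS.2.1 ρ hρ
  obtain ⟨hi1, hi2⟩ := hS.2.2.1 ρ hρ hc f ws hl
  obtain ⟨hdet, ht3, -⟩ := hD ρ hρ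
  rw [hl, wf_app_iff] at hwl
  have hws := ext_list_wf ar mOf ws (fun t ht => wf_ext ar mOf t (hwl.2 t ht)) 0
  -- variables of lhs
  have hlhs : ∀ y : V, ((∃ w ∈ ws, y ∈ w.varList) ∨ ∃ c ∈ ρ.conds.take j, y ∈ c.2.varList) →
      Sum.inl y ∈ (condSRRule mOf idx ρ j).lhs.varList := by
    intro y hy
    simp only [condSRRule, hl]
    rcases hy with hy | ⟨c, hcm, hy⟩
    · obtain ⟨s, hs, hx⟩ := ext_list_var mOf ws y (fun t _ h => ext_var mOf t y h) hy 0
      split <;> exact (mem_varList_app _ _ _).2 ⟨s, List.mem_append_left _ hs, hx⟩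
    · rcases j with _ | j
      · simp at hcm
      · rw [if_neg (by omega), mem_varList_app]
        refine ⟨_, List.mem_append_right _ (List.mem_map.2
          ⟨idx ρ - 1, List.mem_range.2 (by omega), if_pos rfl⟩), ?_⟩
        simp only [tupT, guardT, mem_varList_app, List.mem_cons, Nat.add_sub_cancel]
        rcases take_succ_mem _ _ (dummyCond ρ) _ hcm with hcm | ⟨_, rfl⟩
        · refine ⟨.var (Sum.inl y), Or.inr (List.mem_map.2 ⟨y, ?_, rfl⟩), by simp [Term.varList]⟩
          rw [mem_Vlist]
          exact ⟨c, by simpa using hcm, hy⟩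
        · refine ⟨_, Or.inl rfl, ?_⟩
          simp only [mem_varList_app, List.mem_singleton, exists_eq_left]
          exact ext_var _ _ _ hy _
  have key : ∀ i ≤ j, ∀ y : V, 0 < seqCount y (ρ.lhs :: (ρ.conds.take i).map Prod.snd) →
      Sum.inl y ∈ (condSRRule mOf idx ρ j).lhs.varList := by
    intro i hi y hy
    apply hlhs
    rw [seqCount_pos'] at hy
    obtain ⟨t, ht, hy⟩ := hy
    rcases List.mem_cons.1 ht with rfl | ht
    · left
      rwa [hl, mem_varList_app] at hy
    · right
      obtain ⟨c, hcm, rfl⟩ := List.mem_map.1 ht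
      exact ⟨c, List.take_subset_take_left _ hi hcm, hy⟩
  by_cases hjk : j = ρ.conds.length
  · have hr : (condSRRule mOf idx ρ j).rhs = guardT (barT mOf ρ.rhs) := by
      simp [condSRRule, hl, hjk]
    refine ⟨by rw [hr]; exact (wf_guard ..).2 (wf_bar _ _ _ hwr), ?_⟩
    intro x hx
    rw [hr] at hx
    simp only [guardT, mem_varList_app, List.mem_singleton, exists_eq_left] at hx
    obtain ⟨y, hy, rfl⟩ := varList_bar _ _ _ hx
    have := ht3 y ((count_pos' _ _).2 hy)
    rw [seqCount_pos'] at this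
    obtain ⟨t, ht, hy⟩ := this
    rcases List.mem_cons.1 ht with rfl | ht
    · apply key 0 (by omega)
      rw [seqCount_pos']
      exact ⟨_, List.mem_cons_self, hy⟩
    · obtain ⟨c, hcm, ht⟩ := List.mem_flatMap.1 ht
      simp only [List.mem_cons, List.not_mem_nil, or_false] at ht
      rcases ht with rfl | rfl
      · obtain ⟨n, hn, rfl⟩ := List.mem_iff_getElem.1 hcm
        exact key n (by omega) y (hdet n hn y ((count_pos' _ _).2 hy))
      · apply key j le_rfl
        rw [seqCount_pos', hjk, List.take_length]
        exact ⟨_, List.mem_cons_of_mem _ (List.mem_map_of_mem hcm), hy⟩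
  · have hjl : j < ρ.conds.length := by omega
    have hg : ρ.conds.getD j (dummyCond ρ) = ρ.conds[j] := by
      simp [List.getD_eq_getElem?_getD, hjl]
    have hr : (condSRRule mOf idx ρ j).rhs = .app (SSym.orig f)
        ((extTList mOf ws 0).1 ++ (List.range (mOf f)).map (fun q => if q = idx ρ - 1 then
          tupT ρ (j + 1) (barT mOf ρ.conds[j].1) else
            .var (Sum.inr ((extTList mOf ws 0).2 + q)))) := by
      simp only [condSRRule, hl, if_neg hjk, hg]
    constructor
    · rw [hr, wf_app_iff]
      refine ⟨by simp [sar, hws.1, hwl.1], ?_⟩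
      intro s hs
      rcases List.mem_append.1 hs with hs | hs
      · exact hws.2 s hs
      · obtain ⟨q, _, rfl⟩ := List.mem_map.1 hs
        split
        · rw [tupT, wf_app_iff]
          refine ⟨by simp [sar]; omega, ?_⟩
          intro a ha
          rcases List.mem_cons.1 ha with rfl | ha
          · exact (wf_guard ..).2 (wf_bar _ _ _ (hwc _ (List.getElem_mem hjl)).1)
          · obtain ⟨v, _, rfl⟩ := List.mem_map.1 ha
            exact .var _
        · exact .var _
    · intro x hx
      rw [hr, mem_varList_app] at hx
      obtain ⟨s, hs, hx⟩ := hx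
      rcases List.mem_append.1 hs with hs | hs
      · simp only [condSRRule, hl]
        split <;> exact (mem_varList_app _ _ _).2 ⟨s, List.mem_append_left _ hs, hx⟩
      · obtain ⟨q, hq, rfl⟩ := List.mem_map.1 hs
        split at hx
        · rw [tupT, mem_varList_app] at hx
          obtain ⟨a, ha, hx⟩ := hx
          rcases List.mem_cons.1 ha with rfl | ha
          · simp only [guardT, mem_varList_app, List.mem_singleton, exists_eq_left] at hx
            obtain ⟨y, hy, rfl⟩ := varList_bar _ _ _ hx
            exact key j le_rfl y (hdet j hjl y ((count_pos' _ _).2 hy))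
          · obtain ⟨v, hv, rfl⟩ := List.mem_map.1 ha
            rw [mem_varList_var] at hx
            subst hx
            apply hlhs
            rw [mem_Vlist] at hv
            exact Or.inr (by simpa using hv)
        · rename_i hne
          simp only [condSRRule, hl]
          split <;>
          · refine (mem_varList_app _ _ _).2 ⟨_, List.mem_append_right _
              (List.mem_map.2 ⟨q, hq, if_neg hne⟩), hx⟩

theorem reachable_wf (R : CTRS F V) (idx : CRule F V → ℕ) (hS : GoodSetup R ar mOf idx)
    (hD : IsDCTRS R) (t : STerm F V) (ht : SRReachable R ar mOf idx t) :
    t.WF (sar ar mOf) := by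
  obtain ⟨s, C, hs, hr⟩ := ht
  apply wf_fill ar mOf C
  have hgood : ∀ r ∈ SRSys R ar mOf idx, GoodRule ar mOf r := by
    rintro r (⟨ρ, hρ, hc, rfl⟩ | ⟨ρ, hρ, hc, j, hj, rfl⟩ | rfl | ⟨f, i, _, rfl⟩)
    · exact good_uncond ar mOf R idx hS hD ρ hρ hc
    · exact good_cond ar mOf R idx hS hD ρ hρ hc j hj
    · refine ⟨(wf_guard ..).2 (.var _), ?_⟩
      intro x hx
      simpa [auxGuard, guardT, mem_varList_app] using hx
    · exact good_auxShift ar mOf f i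
  unfold RedStar at hr
  generalize C.fill t = z at hr ⊢
  induction hr with
  | refl => exact (wf_guard ..).2 (wf_bar _ _ _ hs)
  | tail _ h ih => exact good_step ar mOf _ hgood _ _ h ih

theorem mapM_some {α β : Type} (g : α → Option β) (l : List α) (us : List β)
    (h : l.mapM g = some us) :
    us.length = l.length ∧ ∀ u ∈ us, ∃ a ∈ l, g a = some u := by
  induction l generalizing us with
  | nil => simp at h; simp [h]
  | cons a l ih =>
    simp only [List.mapM_cons, Option.bind_eq_bind, Option.bind_eq_some_iff, Option.pure_def,
      Option.some.injEq] at h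
    obtain ⟨b, hb, bs, hbs, rfl⟩ := h
    obtain ⟨h1, h2⟩ := ih bs hbs
    refine ⟨by simp [h1], ?_⟩
    intro u hu
    rcases List.mem_cons.1 hu with rfl | hu
    · exact ⟨a, List.mem_cons_self, hb⟩
    · obtain ⟨c, hc, e⟩ := h2 u hu
      exact ⟨c, List.mem_cons_of_mem _ hc, e⟩

theorem hat_spec (t : STerm F V) (ht : t.WF (sar ar mOf)) : ∀ u : Term F V,
    hatT ar t = some u → u.WF ar ∧ ∀ x ∈ u.varList, Sum.inl x ∈ t.varList := by
  induction t using Term.ind' with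
  | hv y =>
    intro u hu
    rcases y with y | y
    · simp only [hatT, Option.some.injEq] at hu
      subst hu
      exact ⟨.var _, by simp [Term.varList]⟩
    · simp [hatT] at hu
  | ha g ts ih =>
    intro u hu
    rw [wf_app_iff] at ht
    cases g with
    | orig f =>
      simp only [hatT, Option.map_eq_some_iff] at hu
      obtain ⟨us, hus, rfl⟩ := hu
      obtain ⟨hlen, hm⟩ := mapM_some _ _ _ hus
      constructor
      · rw [wf_app_iff]
        refine ⟨by simp [hlen, ht.1, sar], ?_⟩
        intro w hw
        obtain ⟨a, _, ha⟩ := hm w hw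
        have hmem := List.mem_of_mem_take a.2
        exact (ih a.1 hmem (ht.2 _ hmem) w ha).1
      · intro x hx
        obtain ⟨w, hw, hx⟩ := (mem_varList_app _ _ _).1 hx
        obtain ⟨a, _, ha⟩ := hm w hw
        have hmem := List.mem_of_mem_take a.2
        exact (mem_varList_app _ _ _).2 ⟨a.1, hmem, (ih a.1 hmem (ht.2 _ hmem) w ha).2 x hx⟩
    | bot => simp [hatT] at hu
    | tup ρ j => simp [hatT] at hu
    | guard =>
      obtain ⟨hl, hw⟩ := ht
      simp only [sar] at hl
      obtain ⟨a, rfl⟩ := List.length_eq_one_iff.1 hl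
      simp only [hatT] at hu
      have := ih a (by simp) (hw a (by simp)) u hu
      refine ⟨this.1, fun x hx => (mem_varList_app _ _ _).2 ⟨a, by simp, this.2 x hx⟩⟩

theorem phi_main (R : CTRS F V) (idx : CRule F V → ℕ) (σ : WVar V → STerm F V)
    (σ' : WVar V → Term (UF F V) (WVar V)) (u : Term F V) (hu : u.WF ar)
    (h : ∀ x ∈ u.varList, ∀ w, PhiMem R ar mOf idx (σ (Sum.inl x)) w ↔ w = σ' (Sum.inl x)) :
    ∀ w, PhiMem R ar mOf idx ((barT mOf u).subst σ) w ↔ w = (liftUV u).subst σ' := by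
  induction u using Term.ind' with
  | hv y =>
    intro w
    simpa [barT, liftUV, Term.rename, Term.mapF, Term.subst] using
      h y (by simp [Term.varList]) w
  | ha f ts ih =>
    rw [wf_app_iff] at hu
    have ih' : ∀ t ∈ ts, ∀ w, PhiMem R ar mOf idx ((barT mOf t).subst σ) w ↔
        w = (liftUV t).subst σ' := fun t ht =>
      ih t ht (hu.2 t ht) (fun x hx => h x ((mem_varList_app _ _ _).2 ⟨t, ht, hx⟩))
    have e1 : (barT mOf (.app f ts)).subst σ = .app (.orig f)
        (ts.map (fun t => (barT mOf t).subst σ) ++ List.replicate (mOf f) botT) := by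
      rw [barT_app', subst_app']
      simp [botT, subst_app', Function.comp_def]
    have e2 : (liftUV (.app f ts)).subst σ' = .app (Sum.inl f)
        (ts.map (fun t => (liftUV t).subst σ')) := by
      simp [liftUV, Term.rename, mapF_app', subst_app', Function.comp_def]
    have htake : (ts.map (fun t => (barT mOf t).subst σ) ++
        List.replicate (mOf f) (botT : STerm F V)).take (ar f) =
        ts.map (fun t => (barT mOf t).subst σ) := by
      rw [List.take_left' (by simp [hu.1])]
    have hdrop : (ts.map (fun t => (barT mOf t).subst σ) ++
        List.replicate (mOf f) (botT : STerm F V)).drop (ar f) =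
        List.replicate (mOf f) botT := by
      rw [List.drop_left' (by simp [hu.1])]
    intro w
    rw [e1, e2]
    constructor
    · intro hw
      generalize hs : (Term.app (.orig f) (ts.map (fun t => (barT mOf t).subst σ) ++
        List.replicate (mOf f) (botT : STerm F V)) : STerm F V) = s at hw
      cases hw with
      | var => simp at hs
      | guard => simp [guardT] at hs
      | orig hlen hp =>
        simp only [Term.app.injEq, SSym.orig.injEq] at hs
        obtain ⟨rfl, rfl⟩ := hs
        rw [htake] at hlen hp
        congr 1
        apply List.ext_getElem (by simpa using hlen)
        intro n hn1 hn2
        have hn : n < ts.length := by simpa using hn2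
        have := hp ((ts.map (fun t => (barT mOf t).subst σ))[n]'(by simpa using hn), _)
          (List.mem_iff_getElem.2 ⟨n, by simp; omega, List.getElem_zip⟩)
        simp only [List.getElem_map] at this ⊢
        exact (ih' _ (List.getElem_mem hn) _).1 this
      | cond _ _ _ _ _ hget =>
        simp only [Term.app.injEq, SSym.orig.injEq] at hs
        obtain ⟨rfl, rfl⟩ := hs
        rw [hdrop, List.getElem?_replicate] at hget
        split at hget <;> simp [botT] at hget
    · rintro rfl
      apply PhiMem.orig
      · rw [htake]; simp
      · rw [htake]
        intro p hp
        obtain ⟨n, hn, rfl⟩ := List.mem_iff_getElem.1 hp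
        have hn' : n < ts.length := by simp at hn; omega
        simp only [List.getElem_zip, List.getElem_map]
        exact (ih' _ (List.getElem_mem hn') _).2 rfl

end

/-- **Lemma (properties of `Φ`, claim (d)).**
Let `R` be a `U`-WLL DCTRS over `F`, `t` a reachable term in `T(F̄,V)` whose
backtranslation `t̂` is defined, and `σ` a substitution over `F̄` whose range
consists of reachable terms.  If `Φ(σ|_{Var(t)}) = {σ'}` for some substitution
`σ'`, then `Φ((t̂)‾σ) = { t̂σ' }`. -/
theorem Phi_hat_bar_subst {F V : Type} [DecidableEq V]
    (R : CTRS F V) (ar mOf : F → ℕ) (idx : CRule F V → ℕ)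
    (hS : GoodSetup R ar mOf idx) (hD : IsDCTRS R) (hU : IsUWLL R)
    (t : STerm F V) (ht : SRReachable R ar mOf idx t)
    (σ : WVar V → STerm F V)
    (hσ : ∀ x : WVar V, σ x ≠ .var x → SRReachable R ar mOf idx (σ x))
    (u : Term F V) (hu : hatT ar t = some u)
    (σ' : WVar V → Term (UF F V) (WVar V))
    (h1 : PhiSub R ar mOf idx (restrictTo σ t) σ')
    (h2 : ∀ σ'', PhiSub R ar mOf idx (restrictTo σ t) σ'' → σ'' = σ') :
    Phi R ar mOf idx ((barT mOf u).subst σ) = {(liftUV u).subst σ'} := by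
  obtain ⟨hwf, hvars⟩ := hat_spec ar mOf t (reachable_wf ar mOf R idx hS hD t ht) u hu
  ext w
  refine phi_main ar mOf R idx σ σ' u hwf ?_ w
  intro x hx w
  have hc : 0 < t.count (Sum.inl x : WVar V) := (count_pos' _ _).2 (hvars x hx)
  have hr : restrictTo σ t (Sum.inl x) = σ (Sum.inl x) := by simp [restrictTo, hc]
  constructor
  · intro hw
    have := h2 (Function.update σ' (Sum.inl x) w) (by
      intro y
      by_cases hy : y = Sum.inl x
      · subst hy
        rw [hr, Function.update_self]; exact hw
      · rw [Function.update_of_ne hy]; exact h1 y)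
    rw [← this, Function.update_self]
  · rintro rfl
    rw [← hr]; exact h1 _
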